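/- Every exact-repair regenerating code with parameters (n,k,d) = (n,6,7), n ≥ 8, and secondary parameters (B,α,β) satisfies 4B ≤ 10α + 43β (equivalently, 4B ≤ 2B_2 + 2B_3 − 3β, where B_2 = 2α + 14β and B_3 = 3α + 9β). -/

import Mathlib

open Finset

/-- Shannon entropy (base 2) of a finitely-valued random variable `X` on a finite
probability space with mass function `P`. -/
noncomputable def entH {Ω S : Type*} [Fintype Ω] (P : Ω → ℝ) (X : Ω → S) : ℝ :=
  letI := Classical.decEq S
  ∑ s ∈ Finset.univ.image X,
    -((∑ ω ∈ Finset.univ.filter (fun ω => X ω = s), P ω) *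
       Real.logb 2 (∑ ω ∈ Finset.univ.filter (fun ω => X ω = s), P ω))

/-- Conditional entropy `H(X | Y) = H(X, Y) - H(Y)`. -/
noncomputable def condH {Ω S T : Type*} [Fintype Ω] (P : Ω → ℝ) (X : Ω → S) (Y : Ω → T) : ℝ :=
  entH P (fun ω => (X ω, Y ω)) - entH P Y

/-- The joint random variable `W_J = (W_j : j ∈ J)`. -/
def jointW {Ω : Type*} {n : ℕ} {σW : Fin n → Type*} (W : ∀ j, Ω → σW j)
    (J : Finset (Fin n)) : Ω → ∀ j : J, σW j.1 :=
  fun ω j => W j.1 ω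

/-- The joint random variable `(S_i^j : (i,j) ∈ E)` for a set `E` of pairs. -/
def jointS {Ω : Type*} {n : ℕ} {σS : Fin n → Fin n → Type*} (S : ∀ i j, Ω → σS i j)
    (E : Finset (Fin n × Fin n)) : Ω → ∀ e : E, σS e.1.1 e.1.2 :=
  fun ω e => S e.1.1 e.1.2 ω

/-- The joint random variable `S_I^j = (S_i^j : i ∈ I)`. -/
def jointSto {Ω : Type*} {n : ℕ} {σS : Fin n → Fin n → Type*} (S : ∀ i j, Ω → σS i j)
    (I : Finset (Fin n)) (j : Fin n) : Ω → ∀ i : I, σS i.1 j :=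
  fun ω i => S i.1 j ω

/-- An exact-repair regenerating code with parameters `(n,k,d)` (with `1 ≤ k ≤ d ≤ n-1`)
and secondary parameters `(B,α,β)`: the file `M`, the stored data `W j` on server `j`
(servers indexed by `Fin n`, server `j` of the paper being index `j-1`), and the helper
information `S i j` sent from server `i` to repair server `j`. -/
structure IsRegenCode {Ω : Type*} [Fintype Ω] (n k d : ℕ) (B α β : ℝ) (P : Ω → ℝ)
    {σM : Type*} {σW : Fin n → Type*} {σS : Fin n → Fin n → Type*}
    (M : Ω → σM) (W : ∀ j, Ω → σW j) (S : ∀ i j, Ω → σS i j) : Prop where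
  prob_nonneg : ∀ ω, 0 ≤ P ω
  prob_sum : ∑ ω, P ω = 1
  hk : 1 ≤ k
  hkd : k ≤ d
  hdn : d + 1 ≤ n
  hB : 0 ≤ B
  hα : 0 ≤ α
  hβ : 0 ≤ β
  hMB : entH P M = B
  hWα : ∀ j, entH P (W j) = α
  hWM : ∀ j, condH P (W j) M = 0
  hMW : ∀ J : Finset (Fin n), k ≤ J.card → condH P M (jointW W J) = 0
  hSβ : ∀ i j, i ≠ j → entH P (S i j) = β
  hSW : ∀ i j, i ≠ j → condH P (S i j) (W i) = 0
  hWS : ∀ (j : Fin n) (I : Finset (Fin n)), d ≤ I.card → j ∉ I →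
    condH P (W j) (jointSto S I j) = 0

/-- `B_q = qα + ((k-q)(k-q-1)/2)β + (d+1-k)(k-q)β`. -/
noncomputable def Bfun (k d q : ℕ) (α β : ℝ) : ℝ :=
  (q : ℝ) * α + (((k - q) * (k - q - 1) : ℕ) : ℝ) / 2 * β
    + (((d + 1 - k) * (k - q) : ℕ) : ℝ) * β

/-!
The joint entropy of a set of random variables is a polymatroid rank function, and so is its
restriction to the contents `W_j` and helper information `S_i^j` of `d + 1` servers. The constraints
of a code are linear inequalities between ranks that are stable under relabelling the servers, hence
averaging over all relabellings we may assume the rank to be symmetric. The helper information sent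
by one server to `m` others then has rank `t m`, with `t` concave, `t 0 = 0` and `t 1 = β`.

Information determined by each of two sets of data counts only once in the rank of their union. Let
`X_m` be the helper information exchanged between server `m` and servers `0, …, m - 1`. It is
determined both by the helper information `Y_m` that repairs servers `0, …, m - 1` and by that
repairing server `m`, so `r Y_{m+1} + r X_m ≤ r Y_m + dβ`. It also shares information with each of
`W_0, …, W_m`, which bounds `r X_m` from below in terms of `r (W_0, …, W_m)`. Finally `B` is bounded
in terms of `r (W_0, …, W_{p-1})` and in terms of `r Y_m` by repairing the remaining servers in
turn. For `k = 6` and `d = 7`, eliminating the ranks of the `X_m` with `Y_3` and with `Y_4` gives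
two bounds on `B`, and the concavity of `t` eliminates `t` from a combination of them.
-/

/-! ### Entropy of partitions -/

theorem ker_pi_eq_iInf_ker {Ω ι : Type*} {σ : ι → Type*} (f : Ω → ∀ i, σ i) :
    Setoid.ker f = ⨅ i, Setoid.ker fun ω => f ω i :=
  le_antisymm (le_iInf fun i _ _ h => congrFun h i)
    fun _ _ h => funext fun i => iInf_le (fun i => Setoid.ker fun ω => f ω i) i h

section Entropy

variable {Ω : Type*} [Fintype Ω] {P : Ω → ℝ}

open Classical in
/-- The mass of the block of the partition `s` that contains `ω`. -/
noncomputable def blockMass (P : Ω → ℝ) (s : Setoid Ω) (ω : Ω) : ℝ :=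
  ∑ ω' with s ω' ω, P ω'

/-- The Shannon entropy (base 2) of a partition of the probability space. A random variable enters
an entropy only through the partition `Setoid.ker X` into its level sets; partitions turn joint
variables into infima and functional dependence into the order of a lattice. -/
noncomputable def partitionEntropy (P : Ω → ℝ) (s : Setoid Ω) : ℝ :=
  -∑ ω, P ω * Real.logb 2 (blockMass P s ω)

theorem entH_eq_partitionEntropy {S : Type*} (P : Ω → ℝ) (X : Ω → S) :
    entH P X = partitionEntropy P (Setoid.ker X) := by
  classical
  unfold entH partitionEntropy
  rw [← sum_neg_distrib, ← sum_fiberwise_of_maps_to (s := univ) (t := univ.image X) (g := X)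
    (by simp)]
  refine sum_congr (by congr) fun s _ => ?_
  rw [sum_mul, ← sum_neg_distrib]
  refine sum_congr (by congr) fun ω hω => ?_
  obtain rfl : X ω = s := by simpa using hω
  simp only [blockMass, Setoid.ker_def]

theorem condH_eq_partitionEntropy {S T : Type*} (P : Ω → ℝ) (X : Ω → S) (Y : Ω → T) :
    condH P X Y = partitionEntropy P (Setoid.ker X ⊓ Setoid.ker Y) -
      partitionEntropy P (Setoid.ker Y) := by
  have hker : Setoid.ker (fun ω => (X ω, Y ω)) = Setoid.ker X ⊓ Setoid.ker Y := by
    ext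
    simp [Setoid.inf_iff_and]
  rw [condH, entH_eq_partitionEntropy, entH_eq_partitionEntropy, hker]

theorem partitionEntropy_top (hP : ∑ ω, P ω = 1) : partitionEntropy P ⊤ = 0 := by
  simp [partitionEntropy, blockMass, hP]

theorem blockMass_mono (hP : ∀ ω, 0 ≤ P ω) {s t : Setoid Ω} (hst : s ≤ t) (ω : Ω) :
    blockMass P s ω ≤ blockMass P t ω := by
  classical
  exact sum_le_sum_of_subset_of_nonneg (monotone_filter_right _ fun _ _ h => hst h)
    fun _ _ _ => hP _

theorem le_blockMass (hP : ∀ ω, 0 ≤ P ω) (s : Setoid Ω) (ω : Ω) : P ω ≤ blockMass P s ω := by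
  classical
  exact single_le_sum (f := P) (fun _ _ => hP _) (by simp)

theorem blockMass_congr {s : Setoid Ω} {ω ω' : Ω} (h : s ω ω') :
    blockMass P s ω = blockMass P s ω' := by
  classical
  exact sum_congr (filter_congr fun _ _ => ⟨fun h' => s.trans h' h,
    fun h' => s.trans h' (s.symm h)⟩) fun _ _ => rfl

theorem partitionEntropy_antitone (hP : ∀ ω, 0 ≤ P ω) : Antitone (partitionEntropy P) := by
  refine fun s t hst => neg_le_neg (sum_le_sum fun ω _ => ?_)
  rcases (hP ω).eq_or_lt with h0 | h0
  · simp [← h0]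
  · exact mul_le_mul_of_nonneg_left (Real.logb_le_logb_of_le one_lt_two
      (h0.trans_le (le_blockMass hP s ω)) (blockMass_mono hP hst ω)) h0.le

open Classical in
theorem sum_mul_blockMass (f : Ω → ℝ) (s : Setoid Ω) (A : Finset Ω) :
    ∑ ω ∈ A, f ω * blockMass P s ω = ∑ a, P a * ∑ ω ∈ A with s a ω, f ω := by
  simp only [blockMass, mul_sum, sum_filter, mul_ite, mul_zero]
  rw [sum_comm]
  simp only [mul_comm]

open Classical in
theorem sum_div_blockMass_le_one (s : Setoid Ω) (ω : Ω) :
    ∑ ω' with s ω' ω, P ω' / blockMass P s ω' ≤ 1 := by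
  rw [sum_congr rfl fun ω' hω' => by rw [blockMass_congr (mem_filter.1 hω').2], ← sum_div]
  exact div_self_le_one _

open Classical in
theorem sum_div_blockMass_inf_le (hP : ∀ ω, 0 ≤ P ω) {s t u : Setoid Ω} (hs : s ≤ u) (ht : t ≤ u)
    (a : Ω) :
    ∑ ω with s a ω, P ω / blockMass P (s ⊓ t) ω * blockMass P t ω ≤ blockMass P u a := by
  rw [sum_mul_blockMass, blockMass, sum_filter]
  refine sum_le_sum fun b _ => ?_
  rw [filter_filter]
  rcases ({ω | s a ω ∧ t b ω} : Finset Ω).eq_empty_or_nonempty with hempty | ⟨c, hc⟩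
  · rw [hempty, sum_empty, mul_zero]
    split_ifs <;> simp [hP]
  · obtain ⟨hac, hbc⟩ : s a c ∧ t b c := by simpa using hc
    have hblock : ∀ ω, s a ω ∧ t b ω ↔ (s ⊓ t) ω c := fun ω =>
      ⟨fun h => ⟨s.trans (s.symm h.1) hac, t.trans (t.symm h.2) hbc⟩,
        fun h => ⟨s.trans hac (s.symm h.1), t.trans hbc (t.symm h.2)⟩⟩
    rw [if_pos (u.trans (ht hbc) (u.symm (hs hac)))]
    simp only [hblock]
    exact mul_le_of_le_one_right (hP b) (sum_div_blockMass_le_one _ _)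

theorem sum_mul_blockMass_ratio_le (hP : ∀ ω, 0 ≤ P ω) {s t u : Setoid Ω} (hs : s ≤ u)
    (ht : t ≤ u) :
    ∑ ω, P ω * (blockMass P s ω * blockMass P t ω / (blockMass P (s ⊓ t) ω * blockMass P u ω)) ≤
      ∑ ω, P ω := by
  classical
  calc
    _ = ∑ ω, P ω / blockMass P (s ⊓ t) ω * blockMass P t ω / blockMass P u ω *
        blockMass P s ω := by
      refine sum_congr rfl fun ω _ => ?_
      ring
    _ = ∑ a, P a * ((∑ ω with s a ω, P ω / blockMass P (s ⊓ t) ω * blockMass P t ω) /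
        blockMass P u a) := by
      rw [sum_mul_blockMass]
      refine sum_congr rfl fun a _ => ?_
      rw [sum_div]
      congr 1
      refine sum_congr rfl fun ω hω => ?_
      rw [blockMass_congr (hs (mem_filter.1 hω).2)]
    _ ≤ ∑ a, P a := by
      refine sum_le_sum fun a _ => mul_le_of_le_one_right (hP a) ?_
      exact div_le_one_of_le₀ (sum_div_blockMass_inf_le hP hs ht a)
        ((hP a).trans (le_blockMass hP u a))

/-- Gibbs' inequality: `log x ≤ x - 1` for the ratio of block masses reduces the claim to
`sum_mul_blockMass_ratio_le`. -/
theorem partitionEntropy_inf_add_le (hP : ∀ ω, 0 ≤ P ω) {s t u : Setoid Ω} (hs : s ≤ u)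
    (ht : t ≤ u) :
    partitionEntropy P (s ⊓ t) + partitionEntropy P u ≤
      partitionEntropy P s + partitionEntropy P t := by
  have hlog2 : 0 < Real.log 2 := Real.log_pos one_lt_two
  have pointwise : ∀ ω, P ω * (Real.logb 2 (blockMass P s ω) + Real.logb 2 (blockMass P t ω) -
      Real.logb 2 (blockMass P (s ⊓ t) ω) - Real.logb 2 (blockMass P u ω)) ≤
      (P ω * (blockMass P s ω * blockMass P t ω / (blockMass P (s ⊓ t) ω * blockMass P u ω)) -
        P ω) / Real.log 2 := by
    intro ω
    rcases (hP ω).eq_or_lt with h0 | h0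
    · simp [← h0]
    have hpos : ∀ v, 0 < blockMass P v ω := fun v => h0.trans_le (le_blockMass hP v ω)
    have hnum := mul_pos (hpos s) (hpos t)
    have hden := mul_pos (hpos (s ⊓ t)) (hpos u)
    have hlog := Real.log_le_sub_one_of_pos (div_pos hnum hden)
    rw [Real.log_div hnum.ne' hden.ne', Real.log_mul (hpos s).ne' (hpos t).ne',
      Real.log_mul (hpos (s ⊓ t)).ne' (hpos u).ne'] at hlog
    rw [← mul_sub_one, mul_div_assoc]
    refine mul_le_mul_of_nonneg_left ?_ h0.le
    rw [le_div_iff₀ hlog2]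
    simp only [Real.logb, sub_mul, add_mul, div_mul_cancel₀ _ hlog2.ne']
    linarith
  have hsum := sum_le_sum fun ω (_ : ω ∈ univ) => pointwise ω
  rw [← sum_div, sum_sub_distrib] at hsum
  have hratio := hsum.trans (div_nonpos_of_nonpos_of_nonneg
    (sub_nonpos.2 (sum_mul_blockMass_ratio_le hP hs ht)) hlog2.le)
  simp only [mul_sub, mul_add, sum_sub_distrib, sum_add_distrib] at hratio
  simp only [partitionEntropy]
  linarith

end Entropy

/-! ### Polymatroids -/

/-- A polymatroid rank function: normalized, monotone and submodular. Joint entropy, as a function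
of the set of variables, is the example of interest. -/
structure IsPolymatroid {E : Type*} (r : Set E → ℝ) : Prop where
  empty : r ∅ = 0
  mono : Monotone r
  submod : ∀ A C, r (A ∪ C) + r (A ∩ C) ≤ r A + r C

/-- The closure of `A` in the polymatroid `r`: the elements that are determined by `A`. -/
def rankClosure {E : Type*} (r : Set E → ℝ) (A : Set E) : Set E :=
  {e | r (insert e A) ≤ r A}

theorem mem_rankClosure {E : Type*} {r : Set E → ℝ} {A : Set E} {e : E} :
    e ∈ rankClosure r A ↔ r (insert e A) ≤ r A :=
  Iff.rfl

theorem subset_rankClosure {E : Type*} (r : Set E → ℝ) (A : Set E) : A ⊆ rankClosure r A :=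
  fun e he => by rw [mem_rankClosure, Set.insert_eq_of_mem he]

namespace IsPolymatroid

variable {E ι : Type*} {r : Set E → ℝ}

theorem nonneg (h : IsPolymatroid r) (A : Set E) : 0 ≤ r A :=
  h.empty.symm.trans_le (h.mono (Set.empty_subset A))

theorem union_le (h : IsPolymatroid r) (A C : Set E) : r (A ∪ C) ≤ r A + r C :=
  (le_add_of_nonneg_right (h.nonneg _)).trans (h.submod A C)

theorem rankClosure_mono (h : IsPolymatroid r) : Monotone (rankClosure r) := by
  intro A C hAC e he
  have hsub := h.submod (insert e A) C
  have hinter := h.mono (Set.subset_inter (Set.subset_insert e A) hAC)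
  rw [Set.insert_union, Set.union_eq_right.2 hAC] at hsub
  exact le_of_add_le_add_right (hsub.trans ((add_comm _ _).trans_le
    (add_le_add_right (le_trans he hinter) _)))

variable [Finite E]

theorem rank_union_le_of_subset_rankClosure (h : IsPolymatroid r) {A C : Set E}
    (hC : C ⊆ rankClosure r A) : r (A ∪ C) ≤ r A := by
  induction C, C.toFinite using Set.Finite.induction_on with
  | empty => simp
  | @insert e C _ _ ih =>
    rw [Set.union_insert]
    exact (h.rankClosure_mono Set.subset_union_left (hC (Set.mem_insert e C))).trans
      (ih ((Set.subset_insert e C).trans hC))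

theorem rank_rankClosure (h : IsPolymatroid r) (A : Set E) : r (rankClosure r A) = r A :=
  le_antisymm ((h.mono Set.subset_union_right).trans
    (h.rank_union_le_of_subset_rankClosure subset_rfl)) (h.mono (subset_rankClosure r A))

theorem rank_le_of_subset_rankClosure (h : IsPolymatroid r) {A C : Set E}
    (hC : C ⊆ rankClosure r A) : r C ≤ r A :=
  (h.mono hC).trans (h.rank_rankClosure A).le

theorem rankClosure_subset_rankClosure (h : IsPolymatroid r) {A C : Set E}
    (hAC : A ⊆ rankClosure r C) : rankClosure r A ⊆ rankClosure r C := fun e he =>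
  calc r (insert e C)
      ≤ r (insert e (rankClosure r C)) := h.mono (Set.insert_subset_insert (subset_rankClosure r C))
    _ ≤ r (rankClosure r C) := h.rankClosure_mono hAC he
    _ = r C := h.rank_rankClosure C

theorem union_add_le (h : IsPolymatroid r) {A C D : Set E}
    (hA : D ⊆ rankClosure r A) (hC : D ⊆ rankClosure r C) : r (A ∪ C) + r D ≤ r A + r C := by
  have hsub := h.submod (rankClosure r A) (rankClosure r C)
  rw [h.rank_rankClosure, h.rank_rankClosure] at hsub
  exact (add_le_add (h.mono (Set.union_subset_union (subset_rankClosure r A)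
    (subset_rankClosure r C))) (h.mono (Set.subset_inter hA hC))).trans hsub

theorem union_biUnion_add_sum_le (h : IsPolymatroid r) {A : Set E} (I : Finset ι)
    (X D : ι → Set E) (hA : ∀ i ∈ I, D i ⊆ rankClosure r A)
    (hX : ∀ i ∈ I, D i ⊆ rankClosure r (X i)) :
    r (A ∪ ⋃ i ∈ I, X i) + ∑ i ∈ I, r (D i) ≤ r A + ∑ i ∈ I, r (X i) := by
  classical
  induction I using Finset.induction_on with
  | empty => simp
  | insert i I hi ih =>
    have hstep := h.union_add_le (A := A ∪ ⋃ i ∈ I, X i) (C := X i)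
      ((hA i (mem_insert_self i I)).trans (h.rankClosure_mono Set.subset_union_left))
      (hX i (mem_insert_self i I))
    have hrest := ih (fun j hj => hA j (mem_insert_of_mem hj))
      fun j hj => hX j (mem_insert_of_mem hj)
    rw [set_biUnion_insert, Set.union_left_comm, Set.union_comm, sum_insert hi, sum_insert hi]
    linarith

theorem rank_le_ncard_mul (h : IsPolymatroid r) {A : Set E} {b : ℝ} (hb : ∀ e ∈ A, r {e} ≤ b) :
    r A ≤ A.ncard * b := by
  induction A, A.toFinite using Set.Finite.induction_on with
  | empty => simp [h.empty]
  | @insert e A he _ ih =>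
    have hstep := h.union_le {e} A
    have hrest := ih fun x hx => hb x (Set.mem_insert_of_mem e hx)
    rw [Set.ncard_insert_of_notMem he, Set.insert_eq]
    push_cast
    linarith [hb e (Set.mem_insert e A)]

end IsPolymatroid

theorem isPolymatroid_partitionEntropy {Ω E : Type*} [Fintype Ω] {P : Ω → ℝ}
    (hP : ∀ ω, 0 ≤ P ω) (hP1 : ∑ ω, P ω = 1) (x : E → Setoid Ω) :
    IsPolymatroid fun A => partitionEntropy P (⨅ e ∈ A, x e) where
  empty := by simp [partitionEntropy_top hP1]
  mono A C hAC := partitionEntropy_antitone hP (biInf_mono hAC)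
  submod A C := by
    rw [_root_.iInf_union]
    exact partitionEntropy_inf_add_le hP (biInf_mono Set.inter_subset_left)
      (biInf_mono Set.inter_subset_right)

/-! ### Repair systems -/

/-- The data in a repair system with set of servers `V`: `stored j` is the content of server `j`
(`W_j` in the paper) and `sent i j` is the helper information from `i` to `j` (`S_i^j`). The label
`sent i i` carries no meaning. -/
inductive Datum (V : Type*)
  | stored (j : V)
  | sent (i j : V)

namespace Datum

variable {V : Type*}

instance [Finite V] : Finite (Datum V) :=
  .of_surjective (Sum.elim stored (Function.uncurry sent)) <| by
    rintro (j | ⟨i, j⟩)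
    · exact ⟨.inl j, rfl⟩
    · exact ⟨.inr (i, j), rfl⟩

/-- The relabelling of data induced by a map of servers. -/
def relabel (f : V → V) : Datum V → Datum V
  | stored j => stored (f j)
  | sent i j => sent (f i) (f j)

theorem relabel_relabel (f g : V → V) (e : Datum V) :
    relabel f (relabel g e) = relabel (f ∘ g) e := by
  cases e <;> rfl

/-- The helper information from all other servers to `j`. -/
def helpers (j : V) : Set (Datum V) := (sent · j) '' {j}ᶜ

theorem sent_mem_helpers {i j : V} (hij : i ≠ j) : sent i j ∈ helpers j := ⟨i, hij, rfl⟩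

theorem relabel_image_helpers (π : Equiv.Perm V) (j : V) :
    relabel π '' helpers j = helpers (π j) := by
  rw [helpers, helpers, ← Set.image_singleton, ← Set.image_compl_eq π.bijective, Set.image_image,
    Set.image_image]
  rfl

end Datum

section Repair

open Datum

/-- A polymatroid rank function on the data of a repair system, with the properties of the joint
entropy of a regenerating code on the servers `V` in which `k` servers determine the file of entropy
`B`, and a server is repaired by all the others. The file is not among the data. -/
structure IsRepairRank {V : Type*} (k : ℕ) (B α β : ℝ) (r : Set (Datum V) → ℝ) : Prop extends
    IsPolymatroid r where
  rank_stored : ∀ j, r {stored j} = α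
  rank_sent : ∀ i j, i ≠ j → r {sent i j} = β
  sent_mem : ∀ i j, i ≠ j → sent i j ∈ rankClosure r {stored i}
  stored_mem : ∀ j, stored j ∈ rankClosure r (helpers j)
  file_le : ∀ J : Finset V, J.card = k → B ≤ r (stored '' J)

/-- A repair rank that is invariant under relabelling of the servers. -/
structure IsSymmRepairRank {V : Type*} (k : ℕ) (B α β : ℝ) (r : Set (Datum V) → ℝ) : Prop extends
    IsRepairRank k B α β r where
  symm : ∀ (π : Equiv.Perm V) (A : Set (Datum V)), r (relabel π '' A) = r A

open scoped BigOperators in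
theorem IsRepairRank.expect_perm {V : Type*} [Fintype V] [DecidableEq V] {k : ℕ} {B α β : ℝ}
    {r : Set (Datum V) → ℝ} (h : IsRepairRank k B α β r) :
    IsSymmRepairRank k B α β fun A => 𝔼 π : Equiv.Perm V, r (relabel π '' A) where
  empty := by simp [h.empty]
  mono A C hAC := expect_le_expect fun π _ => h.mono (Set.image_mono hAC)
  submod A C := by
    rw [← expect_add_distrib, ← expect_add_distrib]
    refine expect_le_expect fun π _ => le_trans ?_ (h.submod _ _)
    rw [Set.image_union]
    gcongr
    exact h.mono (Set.image_inter_subset _ _ _)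
  rank_stored j := by simp [relabel, h.rank_stored]
  rank_sent i j hij := by simp [relabel, h.rank_sent _ _ (Equiv.injective _ |>.ne hij)]
  sent_mem i j hij := by
    refine mem_rankClosure.2 (expect_le_expect fun π _ => ?_)
    simpa [Set.image_insert_eq, relabel, mem_rankClosure] using h.sent_mem _ _ (π.injective.ne hij)
  stored_mem j := by
    refine mem_rankClosure.2 (expect_le_expect fun π _ => ?_)
    simpa [Set.image_insert_eq, relabel, relabel_image_helpers, mem_rankClosure] using
      h.stored_mem (π j)
  file_le J hJ := by
    refine le_expect univ_nonempty fun π _ => ?_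
    simpa [Set.image_image, relabel] using h.file_le (J.map π.toEmbedding) (by rwa [card_map])
  symm σ A := by
    refine Fintype.expect_equiv (Equiv.mulRight σ) _ _ fun π => ?_
    simp only [Set.image_image, relabel_relabel, Equiv.coe_mulRight, Equiv.Perm.coe_mul]

section Code

variable {Ω V : Type*} {n : ℕ} {σM : Type*} {σW : Fin n → Type*} {σS : Fin n → Fin n → Type*}
  {W : ∀ j, Ω → σW j} {S : ∀ i j, Ω → σS i j}

theorem ker_jointW (W : ∀ j, Ω → σW j) (J : Finset (Fin n)) :
    Setoid.ker (jointW W J) = ⨅ j ∈ J, Setoid.ker (W j) :=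
  (ker_pi_eq_iInf_ker _).trans (iInf_subtype (f := fun j => Setoid.ker (W j.1)))

theorem ker_jointSto (S : ∀ i j, Ω → σS i j) (I : Finset (Fin n)) (j : Fin n) :
    Setoid.ker (jointSto S I j) = ⨅ i ∈ I, Setoid.ker (S i j) :=
  (ker_pi_eq_iInf_ker _).trans (iInf_subtype (f := fun i => Setoid.ker (S i.1 j)))

/-- The level-set partition of a datum of a code, the servers `V` being mapped by `f` to those of
the code. -/
def Datum.partition (W : ∀ j, Ω → σW j) (S : ∀ i j, Ω → σS i j) (f : V → Fin n) :
    Datum V → Setoid Ω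
  | stored j => Setoid.ker (W (f j))
  | sent i j => Setoid.ker (S (f i) (f j))

theorem iInf_partition_stored (f : V ↪ Fin n) (J : Finset V) :
    ⨅ e ∈ stored '' (J : Set V), Datum.partition W S f e = Setoid.ker (jointW W (J.map f)) := by
  simp only [ker_jointW, ← mem_coe, coe_map, _root_.iInf_image]
  rfl

theorem iInf_partition_helpers [Fintype V] [DecidableEq V] (f : V ↪ Fin n) (j : V) :
    ⨅ e ∈ helpers j, Datum.partition W S f e =
      Setoid.ker (jointSto S (({j}ᶜ : Finset V).map f) (f j)) := by
  simp only [ker_jointSto, helpers, ← mem_coe, coe_map, _root_.iInf_image, coe_compl, coe_singleton]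
  rfl

theorem IsRegenCode.isRepairRank [Fintype Ω] [Fintype V] {k d : ℕ} {B α β : ℝ} {P : Ω → ℝ}
    {M : Ω → σM} (h : IsRegenCode n k d B α β P M W S) (hV : Fintype.card V = d + 1)
    (f : V ↪ Fin n) :
    IsRepairRank k B α β
      fun A : Set (Datum V) => partitionEntropy P (⨅ e ∈ A, Datum.partition W S f e) where
  toIsPolymatroid := isPolymatroid_partitionEntropy h.prob_nonneg h.prob_sum _
  rank_stored j := by simpa [Datum.partition, entH_eq_partitionEntropy] using h.hWα (f j)
  rank_sent i j hij := by
    simpa [Datum.partition, entH_eq_partitionEntropy] using h.hSβ _ _ (f.injective.ne hij)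
  sent_mem i j hij := by
    have hdet := h.hSW _ _ (f.injective.ne hij)
    rw [condH_eq_partitionEntropy, sub_eq_zero] at hdet
    rw [mem_rankClosure, _root_.iInf_insert, _root_.iInf_singleton]
    exact hdet.le
  stored_mem j := by
    classical
    have hdet := h.hWS (f j) (({j}ᶜ : Finset V).map f) (by simp [card_compl, hV]) (by simp)
    rw [condH_eq_partitionEntropy, sub_eq_zero, ← iInf_partition_helpers (W := W)] at hdet
    rw [mem_rankClosure, _root_.iInf_insert]
    exact hdet.le
  file_le J hJ := by
    have hdet := h.hMW (J.map f) (by simp [hJ])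
    rw [condH_eq_partitionEntropy, sub_eq_zero, ← iInf_partition_stored (S := S)] at hdet
    rw [← h.hMB, entH_eq_partitionEntropy]
    exact (partitionEntropy_antitone h.prob_nonneg inf_le_left).trans hdet.le

end Code

/-! ### Repair of the first servers -/

/-- The servers `0, …, m - 1` among `0, …, d`. -/
def firstServers (d m : ℕ) : Finset (Fin (d + 1)) := {i | i.val < m}

section FirstServers

variable {d m : ℕ}

@[simp]
theorem mem_firstServers {i : Fin (d + 1)} : i ∈ firstServers d m ↔ i.val < m := by
  simp [firstServers]

theorem card_firstServers (hm : m ≤ d + 1) : (firstServers d m).card = m :=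
  (Fin.card_filter_val_lt).trans (min_eq_right hm)

theorem firstServers_succ (m : Fin (d + 1)) :
    firstServers d (m + 1) = insert m (firstServers d m) := by
  ext i
  simp only [mem_firstServers, mem_insert, Fin.ext_iff]
  omega

theorem firstServers_mono (d : ℕ) : Monotone (firstServers d) := fun _ _ hmp _ hi =>
  mem_firstServers.2 ((mem_firstServers.1 hi).trans_le hmp)

end FirstServers

namespace Datum

/-- The helper information for the repair of the first `m` servers. -/
def helpersUpto (d m : ℕ) : Set (Datum (Fin (d + 1))) :=
  ⋃ j ∈ firstServers d m, helpers j

theorem helpersUpto_succ {d : ℕ} (m : Fin (d + 1)) :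
    helpersUpto d (m + 1) = helpers m ∪ helpersUpto d m := by
  rw [helpersUpto, firstServers_succ, set_biUnion_insert, helpersUpto]

theorem sent_image_subset_helpersUpto {d m : ℕ} {i : Fin (d + 1)} (hi : i ∉ firstServers d m) :
    sent i '' firstServers d m ⊆ helpersUpto d m := by
  rintro _ ⟨j, hj, rfl⟩
  exact Set.mem_biUnion hj (sent_mem_helpers (ne_of_mem_of_not_mem hj hi).symm)

/-- The helper information exchanged between server `m` and the servers before it. -/
def exchange {d : ℕ} (m : Fin (d + 1)) : Set (Datum (Fin (d + 1))) :=
  sent m '' firstServers d m ∪ (sent · m) '' firstServers d m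

end Datum

namespace IsRepairRank

section

variable {V : Type*} [Finite V] {k : ℕ} {B α β : ℝ} {r : Set (Datum V) → ℝ}

theorem sent_mem_rankClosure_of_stored_mem (h : IsRepairRank k B α β r)
    {A : Set (Datum V)} {i j : V} (hi : stored i ∈ rankClosure r A) (hij : i ≠ j) :
    sent i j ∈ rankClosure r A :=
  h.rankClosure_subset_rankClosure (Set.singleton_subset_iff.2 hi) (h.sent_mem i j hij)

theorem sent_image_subset_rankClosure_of_stored_mem (h : IsRepairRank k B α β r)
    {A : Set (Datum V)} {i : V} (hi : stored i ∈ rankClosure r A)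
    {J : Finset V} (hJ : i ∉ J) : sent i '' J ⊆ rankClosure r A := by
  rintro _ ⟨j, hj, rfl⟩
  exact h.sent_mem_rankClosure_of_stored_mem hi (ne_of_mem_of_not_mem hj hJ).symm

end

variable {k d m p : ℕ} {B α β : ℝ} {r : Set (Datum (Fin (d + 1))) → ℝ}

theorem stored_image_subset_rankClosure_helpersUpto (h : IsRepairRank k B α β r) :
    stored '' firstServers d m ⊆ rankClosure r (helpersUpto d m) := by
  rintro _ ⟨j, hj, rfl⟩
  exact h.rankClosure_mono (Set.subset_biUnion_of_mem (u := helpers) hj) (h.stored_mem j)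

theorem rank_helpers_le (h : IsRepairRank k B α β r) (j : Fin (d + 1)) :
    r (helpers j) ≤ d * β := by
  have hle := h.rank_le_ncard_mul (A := helpers j) (b := β) <| by
    rintro _ ⟨i, hi, rfl⟩
    exact (h.rank_sent _ _ hi).le
  rwa [helpers, Set.ncard_image_of_injective _ fun i j hij => by simpa using hij,
    Set.ncard_compl, Set.ncard_singleton, Nat.card_fin, Nat.add_sub_cancel] at hle

theorem helpersUpto_succ_add_exchange_le (h : IsRepairRank k B α β r) (m : Fin (d + 1)) :
    r (helpersUpto d (m + 1)) + r (exchange m) ≤ r (helpersUpto d m) + d * β := by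
  have hne : ∀ i ∈ firstServers d m, i ≠ m := fun i hi => ne_of_mem_of_not_mem hi (by simp)
  have hupto : exchange m ⊆ rankClosure r (helpersUpto d m) := by
    rintro _ (⟨j, hj, rfl⟩ | ⟨i, hi, rfl⟩)
    · exact subset_rankClosure r _ (Set.mem_biUnion hj (sent_mem_helpers (hne j hj).symm))
    · exact h.sent_mem_rankClosure_of_stored_mem
        (h.stored_image_subset_rankClosure_helpersUpto ⟨i, hi, rfl⟩) (hne i hi)
  have hnew : exchange m ⊆ rankClosure r (helpers m) := by
    rintro _ (⟨j, hj, rfl⟩ | ⟨i, hi, rfl⟩)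
    · exact h.sent_mem_rankClosure_of_stored_mem (h.stored_mem m) (hne j hj).symm
    · exact subset_rankClosure r _ (sent_mem_helpers (hne i hi))
  have hstep := h.union_add_le hupto hnew
  rw [Set.union_comm, ← helpersUpto_succ] at hstep
  exact hstep.trans (add_le_add_right (h.rank_helpers_le m) _)

theorem helpersUpto_add_sum_exchange_le (h : IsRepairRank k B α β r) (hm : m ≤ d + 1) :
    r (helpersUpto d m) + ∑ i ∈ firstServers d m, r (exchange i) ≤ m * (d * β) := by
  induction m with
  | zero => simp [helpersUpto, firstServers, h.empty]
  | succ m ih =>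
    have hstep := h.helpersUpto_succ_add_exchange_le ⟨m, hm⟩
    have hsum := firstServers_succ (⟨m, hm⟩ : Fin (d + 1))
    simp only at hstep hsum
    rw [hsum, sum_insert (by simp)]
    push_cast
    linarith [ih (by omega)]

theorem rank_stored_succ_le (h : IsRepairRank k B α β r) (m : Fin (d + 1)) :
    r (stored '' firstServers d (m + 1)) ≤ r (stored '' firstServers d m) + α := by
  rw [firstServers_succ, coe_insert, Set.image_insert_eq, Set.insert_eq, Set.union_comm,
    ← h.rank_stored m]
  exact h.union_le _ _

theorem file_le_of_sent_mem (h : IsRepairRank k B α β r) {A : Set (Datum (Fin (d + 1)))}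
    (hk : k ≤ d + 1) (hstored : stored '' firstServers d p ⊆ rankClosure r A)
    (hsent : ∀ i j : Fin (d + 1), p ≤ j.val → j < i → j.val < k → sent i j ∈ rankClosure r A) :
    B ≤ r A := by
  have hrepair : ∀ j : Fin (d + 1), j.val < k → stored j ∈ rankClosure r A := by
    intro j
    induction j using WellFoundedLT.induction with
    | ind j ih =>
      intro hjk
      rcases lt_or_ge j.val p with hjp | hjp
      · exact hstored ⟨j, mem_firstServers.2 hjp, rfl⟩
      refine h.rankClosure_subset_rankClosure ?_ (h.stored_mem j)
      rintro _ ⟨i, hij, rfl⟩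
      rcases lt_or_gt_of_ne hij with hij' | hji
      · exact h.sent_mem_rankClosure_of_stored_mem (ih i hij' (lt_trans hij' hjk)) hij
      · exact hsent i j hjp hji hjk
  refine (h.file_le _ (card_firstServers hk)).trans (h.rank_le_of_subset_rankClosure ?_)
  rintro _ ⟨j, hj, rfl⟩
  exact hrepair j (mem_firstServers.1 hj)

end IsRepairRank

/-! ### Symmetric repair ranks -/

theorem exists_perm_apply_eq_and_map_eq {V : Type*} [Finite V] {i i' : V} {J J' : Finset V}
    (hi : i ∉ J) (hi' : i' ∉ J') (hcard : J.card = J'.card) :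
    ∃ π : Equiv.Perm V, π i = i' ∧ J.map π.toEmbedding = J' := by
  classical
  have := Fintype.ofFinite V
  let e : {x // x ∈ J} ≃ {x // x ∈ J'} := equivOfCardEq hcard
  have he : ∀ x ∈ J, e.extendSubtype x ∈ J' := e.extendSubtype_mem
  have hei : e.extendSubtype i ∉ J' := e.extendSubtype_not_mem i hi
  refine ⟨e.extendSubtype.trans (Equiv.swap (e.extendSubtype i) i'), by simp,
    eq_of_subset_of_card_le (fun y hy => ?_) (by simp [hcard])⟩
  obtain ⟨x, hx, rfl⟩ := mem_map.1 hy
  have hfix : Equiv.swap (e.extendSubtype i) i' (e.extendSubtype x) = e.extendSubtype x :=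
    Equiv.swap_apply_of_ne_of_ne (ne_of_mem_of_not_mem (he x hx) hei)
      (ne_of_mem_of_not_mem (he x hx) hi')
  simpa [hfix] using he x hx

theorem IsSymmRepairRank.rank_sent_image_eq {V : Type*} [Finite V] {k : ℕ} {B α β : ℝ}
    {r : Set (Datum V) → ℝ} (h : IsSymmRepairRank k B α β r) {i i' : V} {J J' : Finset V}
    (hi : i ∉ J) (hi' : i' ∉ J') (hcard : J.card = J'.card) :
    r (sent i '' J) = r (sent i' '' J') := by
  obtain ⟨π, rfl, rfl⟩ := exists_perm_apply_eq_and_map_eq hi hi' hcard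
  rw [← h.symm π, coe_map, Set.image_image, Set.image_image]
  rfl

/-- The rank of the helper information sent by one server to `m` others: in a symmetric repair rank
it depends only on `m`, so we may use server `d` as the sender and `0, …, m - 1` as the
recipients. -/
def sentRank {d : ℕ} (r : Set (Datum (Fin (d + 1))) → ℝ) (m : ℕ) : ℝ :=
  r (sent (Fin.last d) '' firstServers d m)

namespace IsSymmRepairRank

variable {k d m p : ℕ} {B α β : ℝ} {r : Set (Datum (Fin (d + 1))) → ℝ}

theorem rank_sent_image (h : IsSymmRepairRank k B α β r) {i : Fin (d + 1)}
    {J : Finset (Fin (d + 1))} (hi : i ∉ J) : r (sent i '' J) = sentRank r J.card := by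
  have hJ : J.card < d + 1 := by simpa using card_lt_univ_of_notMem hi
  refine h.rank_sent_image_eq hi ?_ (card_firstServers hJ.le).symm
  simpa using hJ

theorem sentRank_zero (h : IsSymmRepairRank k B α β r) : sentRank r 0 = 0 := by
  simpa using (h.rank_sent_image (notMem_empty (0 : Fin (d + 1)))).symm.trans (by simp [h.empty])

theorem sentRank_one (h : IsSymmRepairRank k B α β r) (hd : 0 < d) : sentRank r 1 = β := by
  have hne : Fin.last d ≠ 0 := by simp [Fin.ext_iff, hd.ne']
  simpa [h.rank_sent _ _ hne] using (h.rank_sent_image (notMem_singleton.2 hne)).symm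

theorem sentRank_le_mul (h : IsSymmRepairRank k B α β r) (hm : m ≤ d) :
    sentRank r m ≤ m * β := by
  have hle := h.rank_le_ncard_mul (A := sent (Fin.last d) '' firstServers d m) (b := β) <| by
    rintro _ ⟨j, hj, rfl⟩
    refine (h.rank_sent _ _ fun hlast => ?_).le
    exact (mem_firstServers.1 (hlast ▸ hj)).not_ge hm
  rwa [Set.ncard_image_of_injective _ fun i j hij => by simpa using hij, Set.ncard_coe_finset,
    card_firstServers (by omega)] at hle

theorem sentRank_card_union_add_le (h : IsSymmRepairRank k B α β r) {i : Fin (d + 1)}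
    {J J' : Finset (Fin (d + 1))} (hi : i ∉ J) (hi' : i ∉ J') :
    sentRank r (J ∪ J').card + sentRank r (J ∩ J').card ≤
      sentRank r J.card + sentRank r J'.card := by
  have hsub := h.submod (sent i '' J) (sent i '' J')
  rwa [← Set.image_union, ← Set.image_inter fun i j hij => by simpa using hij, ← coe_union,
    ← coe_inter, h.rank_sent_image hi, h.rank_sent_image hi', h.rank_sent_image (by simp [hi, hi']),
    h.rank_sent_image (by simp [hi])] at hsub

theorem sentRank_concave (h : IsSymmRepairRank k B α β r) (hm : m + 2 ≤ d) :
    sentRank r (m + 2) + sentRank r m ≤ 2 * sentRank r (m + 1) := by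
  let a : Fin (d + 1) := ⟨m, by omega⟩
  let b : Fin (d + 1) := ⟨m + 1, by omega⟩
  have hab : a ≠ b := by simp [a, b]
  have ha : a ∉ firstServers d m := by simp [a]
  have hb : b ∉ firstServers d m := by simp [b]
  have hlast : ∀ c : Fin (d + 1), c.val < d → Fin.last d ∉ insert c (firstServers d m) := by
    intro c hc
    simp only [mem_insert, mem_firstServers, Fin.ext_iff, Fin.val_last]
    omega
  have hsub := h.sentRank_card_union_add_le (hlast a (show m < d by omega))
    (hlast b (show m + 1 < d by omega))
  have hinter : insert a (firstServers d m) ∩ insert b (firstServers d m) = firstServers d m := by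
    grind
  have hunion : (insert a (firstServers d m) ∪ insert b (firstServers d m)).card = m + 2 := by
    rw [insert_union, union_insert, union_self, card_insert_of_notMem (by simp [hab, ha]),
      card_insert_of_notMem hb, card_firstServers (by omega)]
  rw [hunion, hinter, card_insert_of_notMem ha, card_insert_of_notMem hb,
    card_firstServers (by omega)] at hsub
  linarith

theorem rank_stored_add_le_exchange (h : IsSymmRepairRank k B α β r) (m : Fin (d + 1)) :
    r (stored '' firstServers d (m + 1)) + m * β + sentRank r m ≤
      r (exchange m) + (m + 1) * α := by
  have hm : m ∉ firstServers d m := by simp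
  let J : Fin (d + 1) → Finset (Fin (d + 1)) := fun i => if i = m then firstServers d m else {m}
  have hJ : ∀ i, i ∉ J i := fun i => by
    by_cases hi : i = m <;> simp [J, hi]
  have hexchange : ∀ i ∈ firstServers d (m + 1), sent i '' J i ⊆ exchange m := by
    intro i hi
    rw [firstServers_succ] at hi
    rcases mem_insert.1 hi with rfl | hi
    · simp [J, exchange]
    · have hne : i ≠ m := ne_of_mem_of_not_mem hi hm
      simp only [J, if_neg hne, coe_singleton, Set.image_singleton, Set.singleton_subset_iff]
      exact Or.inr ⟨i, hi, rfl⟩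
  have hshare := h.union_biUnion_add_sum_le (firstServers d (m + 1))
    (fun i => {stored i}) (fun i => sent i '' J i)
    (fun i hi => (hexchange i hi).trans (subset_rankClosure r _))
    fun i _ => h.sent_image_subset_rankClosure_of_stored_mem
      (subset_rankClosure r _ (Set.mem_singleton _)) (hJ i)
  have hsum : ∑ i ∈ firstServers d (m + 1), r (sent i '' J i) = sentRank r m + m * β := by
    rw [firstServers_succ, sum_insert hm, h.rank_sent_image (hJ m)]
    congr 1
    · simp [J, card_firstServers m.isLt.le]
    · have hβ : ∀ i ∈ firstServers d m, r (sent i '' J i) = β := fun i hi => by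
        have hne : i ≠ m := ne_of_mem_of_not_mem hi hm
        simp [J, hne, h.rank_sent]
      rw [sum_congr rfl hβ, sum_const, card_firstServers m.isLt.le, nsmul_eq_mul]
  have hstored : ∑ i ∈ firstServers d (m + 1), r {stored i} = (m + 1) * α := by
    simp [h.rank_stored, card_firstServers (Nat.succ_le_of_lt m.isLt)]
  have hmono : stored '' firstServers d (m + 1) ⊆
      exchange m ∪ ⋃ i ∈ firstServers d (m + 1), {stored i} := by
    rw [Set.image_eq_iUnion]
    exact Set.subset_union_right
  linarith [h.mono hmono]

theorem file_le_of_subset_rankClosure (h : IsSymmRepairRank k B α β r)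
    {A : Set (Datum (Fin (d + 1)))} (hk : k ≤ d + 1) (hmp : m ≤ p) (hpk : p ≤ k)
    (hstored : stored '' firstServers d p ⊆ rankClosure r A)
    (hsent : ∀ i : Fin (d + 1), p ≤ i.val → sent i '' firstServers d m ⊆ rankClosure r A) :
    B ≤ r A + ∑ i : Fin (d + 1) with p ≤ i.val,
      (sentRank r (m + (min i.val k - p)) - sentRank r m) := by
  let I : Finset (Fin (d + 1)) := {i | p ≤ i.val}
  let J : Fin (d + 1) → Finset (Fin (d + 1)) := fun i =>
    firstServers d m ∪ firstServers d (min i k) \ firstServers d p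
  have hI : ∀ {i}, i ∈ I ↔ p ≤ i.val := by simp [I]
  have hcard : ∀ i ∈ I, (J i).card = m + (min i.val k - p) := by
    intro i hi
    have hp : p ≤ min i.val k := le_min (hI.1 hi) hpk
    rw [card_union_of_disjoint (disjoint_sdiff_self_right.mono_left (firstServers_mono d hmp)),
      card_sdiff_of_subset (firstServers_mono d hp), card_firstServers (by omega),
      card_firstServers (by omega), card_firstServers (by omega)]
  have hnot : ∀ i ∈ I, i ∉ J i ∧ i ∉ firstServers d m := by
    intro i hi
    simp only [J, mem_union, mem_sdiff, mem_firstServers]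
    have := hI.1 hi
    omega
  have hshare := h.union_biUnion_add_sum_le I (fun i => sent i '' J i)
    (fun i => sent i '' firstServers d m) (fun i hi => hsent i (hI.1 hi))
    fun i _ => (Set.image_mono (by simp [J])).trans (subset_rankClosure r _)
  have hfile : B ≤ r (A ∪ ⋃ i ∈ I, sent i '' J i) := by
    refine h.file_le_of_sent_mem hk
      (hstored.trans (h.rankClosure_mono Set.subset_union_left)) fun i j hpj hji hjk => ?_
    refine subset_rankClosure r _ (Or.inr (Set.mem_biUnion (hI.2 (hpj.trans hji.le))
      ⟨j, mem_coe.2 (mem_union_right _ ?_), rfl⟩))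
    simpa using ⟨⟨hji, hjk⟩, hpj⟩
  have hJ : ∀ i ∈ I, r (sent i '' J i) = sentRank r (m + (min i.val k - p)) := fun i hi => by
    rw [h.rank_sent_image (hnot i hi).1, hcard i hi]
  have hm : ∀ i ∈ I, r (sent i '' firstServers d m) = sentRank r m := fun i hi => by
    rw [h.rank_sent_image (hnot i hi).2, card_firstServers (by omega)]
  rw [sum_congr rfl hJ, sum_congr rfl hm] at hshare
  rw [sum_sub_distrib]
  linarith

theorem file_le_stored (h : IsSymmRepairRank k B α β r) (hk : k ≤ d + 1) (hpk : p ≤ k) :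
    B ≤ r (stored '' firstServers d p) +
      ((∑ i : Fin (d + 1) with p ≤ i.val, (min i.val k - p) : ℕ) : ℝ) * β := by
  rw [Nat.cast_sum, sum_mul]
  refine (h.file_le_of_subset_rankClosure hk p.zero_le hpk (subset_rankClosure r _)
    (by simp [firstServers])).trans (add_le_add_right (sum_le_sum fun i _ => ?_) _)
  rw [h.sentRank_zero, sub_zero, Nat.zero_add]
  exact h.sentRank_le_mul (by omega)

theorem rank_helpersUpto_union_stored_le (h : IsSymmRepairRank k B α β r) (hm : m ≤ d + 1)
    {I : Finset (Fin (d + 1))} (hI : Disjoint I (firstServers d m)) :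
    r (helpersUpto d m ∪ ⋃ i ∈ I, {stored i}) ≤
      r (helpersUpto d m) + I.card * (α - sentRank r m) := by
  have hnot : ∀ i ∈ I, i ∉ firstServers d m := fun i hi => disjoint_left.1 hI hi
  have hshare := h.union_biUnion_add_sum_le I (fun i => {stored i})
    (fun i => sent i '' firstServers d m)
    (fun i hi => (sent_image_subset_helpersUpto (hnot i hi)).trans (subset_rankClosure r _))
    fun i hi => h.sent_image_subset_rankClosure_of_stored_mem
      (subset_rankClosure r _ (Set.mem_singleton _)) (hnot i hi)
  have hsent : ∀ i ∈ I, r (sent i '' firstServers d m) = sentRank r m := fun i hi => by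
    rw [h.rank_sent_image (hnot i hi), card_firstServers hm]
  rw [sum_congr rfl hsent] at hshare
  simp only [h.rank_stored, sum_const, nsmul_eq_mul] at hshare
  linarith

theorem file_le_helpersUpto (h : IsSymmRepairRank k B α β r) (hk : k ≤ d + 1) (hmp : m ≤ p)
    (hpk : p ≤ k) :
    B ≤ r (helpersUpto d m) + (p - m) * (α - sentRank r m) +
      ∑ i : Fin (d + 1) with p ≤ i.val,
        (sentRank r (m + (min i.val k - p)) - sentRank r m) := by
  let I := firstServers d p \ firstServers d m
  have hrank := h.rank_helpersUpto_union_stored_le (m := m) (by omega)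
    (disjoint_sdiff_self_left : Disjoint I (firstServers d m))
  rw [card_sdiff_of_subset (firstServers_mono d hmp), card_firstServers (by omega),
    card_firstServers (by omega), Nat.cast_sub hmp] at hrank
  refine (h.file_le_of_subset_rankClosure hk hmp hpk ?_ fun i hi => ?_).trans
    (add_le_add_left hrank _)
  · rintro _ ⟨j, hj, rfl⟩
    by_cases hjm : j ∈ firstServers d m
    · exact h.rankClosure_mono Set.subset_union_left
        (h.stored_image_subset_rankClosure_helpersUpto ⟨j, hjm, rfl⟩)
    · exact subset_rankClosure r _ (Or.inr (Set.mem_biUnion (mem_sdiff.2 ⟨hj, hjm⟩) rfl))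
  · refine (sent_image_subset_helpersUpto ?_).trans
      (Set.subset_union_left.trans (subset_rankClosure r _))
    simpa using hmp.trans hi

end IsSymmRepairRank

/-! ### The parameters `k = 6`, `d = 7` -/

namespace IsSymmRepairRank

variable {B α β : ℝ} {r : Set (Datum (Fin (7 + 1))) → ℝ}

theorem file_le_stored_three (h : IsSymmRepairRank 6 B α β r) :
    B ≤ r (stored '' firstServers 7 3) + 9 * β := by
  have hfile := h.file_le_stored (p := 3) (by norm_num) (by norm_num)
  rwa [show ∑ i : Fin 8 with 3 ≤ i.val, (min i.val 6 - 3) = 9 by decide, Nat.cast_ofNat] at hfile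

theorem file_le_stored_four (h : IsSymmRepairRank 6 B α β r) :
    B ≤ r (stored '' firstServers 7 4) + 5 * β := by
  have hfile := h.file_le_stored (p := 4) (by norm_num) (by norm_num)
  rwa [show ∑ i : Fin 8 with 4 ≤ i.val, (min i.val 6 - 4) = 5 by decide, Nat.cast_ofNat] at hfile

theorem file_le_exchange_one (h : IsSymmRepairRank 6 B α β r) :
    B ≤ r (exchange 1) + 3 * α + 7 * β := by
  have stored_two : r (stored '' firstServers 7 2) + β + β ≤ r (exchange 1) + 2 * α := by
    convert h.rank_stored_add_le_exchange 1 using 2 <;> norm_num [h.sentRank_one]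
  have stored_three :
      r (stored '' firstServers 7 3) ≤ r (stored '' firstServers 7 2) + α :=
    h.rank_stored_succ_le 2
  linarith [h.file_le_stored_three]

theorem file_le_exchange_two (h : IsSymmRepairRank 6 B α β r) :
    B + sentRank r 2 ≤ r (exchange 2) + 3 * α + 7 * β := by
  have stored_three :
      r (stored '' firstServers 7 3) + 2 * β + sentRank r 2 ≤ r (exchange 2) + 3 * α := by
    convert h.rank_stored_add_le_exchange 2 using 2 <;> norm_num
  linarith [h.file_le_stored_three]

theorem file_le_exchange_three (h : IsSymmRepairRank 6 B α β r) :
    B + sentRank r 3 ≤ r (exchange 3) + 4 * α + 2 * β := by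
  have stored_four :
      r (stored '' firstServers 7 4) + 3 * β + sentRank r 3 ≤ r (exchange 3) + 4 * α := by
    convert h.rank_stored_add_le_exchange 3 using 2 <;> norm_num
  linarith [h.file_le_stored_four]

theorem three_mul_file_le (h : IsSymmRepairRank 6 B α β r) :
    3 * B ≤ 7 * α + 35 * β + 2 * sentRank r 5 + sentRank r 4 - 4 * sentRank r 3 - sentRank r 2 := by
  have hexchange : r (helpersUpto 7 3) + (r (exchange 0) + (r (exchange 1) + r (exchange 2))) ≤
      3 * (7 * β) := by
    simpa [show firstServers 7 3 = {0, 1, 2} by decide] using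
      h.helpersUpto_add_sum_exchange_le (m := 3) (by norm_num)
  have hfile : B ≤ r (helpersUpto 7 3) + (α - sentRank r 3) +
      (sentRank r 3 + (sentRank r 4 + (sentRank r 5 + sentRank r 5)) - 4 * sentRank r 3) := by
    convert h.file_le_helpersUpto (m := 3) (p := 4) (by norm_num) (by norm_num) (by norm_num)
      using 2
    · norm_num
    · simp [show ({i | 4 ≤ i.val} : Finset (Fin 8)) = {4, 5, 6, 7} by decide]
  linarith [h.nonneg (exchange 0), h.file_le_exchange_one, h.file_le_exchange_two]

theorem four_mul_file_le (h : IsSymmRepairRank 6 B α β r) :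
    4 * B ≤ 11 * α + 44 * β + 2 * sentRank r 5 - 3 * sentRank r 4 - sentRank r 3 -
      sentRank r 2 := by
  have hexchange : r (helpersUpto 7 4) +
      (r (exchange 0) + (r (exchange 1) + (r (exchange 2) + r (exchange 3)))) ≤ 4 * (7 * β) := by
    simpa [show firstServers 7 4 = {0, 1, 2, 3} by decide] using
      h.helpersUpto_add_sum_exchange_le (m := 4) (by norm_num)
  have hfile : B ≤ r (helpersUpto 7 4) + (α - sentRank r 4) +
      (sentRank r 4 + (sentRank r 5 + sentRank r 5) - 3 * sentRank r 4) := by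
    convert h.file_le_helpersUpto (m := 4) (p := 5) (by norm_num) (by norm_num) (by norm_num)
      using 2
    · norm_num
    · simp [show ({i | 5 ≤ i.val} : Finset (Fin 8)) = {5, 6, 7} by decide]
  linarith [h.nonneg (exchange 0), h.file_le_exchange_one, h.file_le_exchange_two,
    h.file_le_exchange_three]

theorem ten_mul_file_le (h : IsSymmRepairRank 6 B α β r) : 10 * B ≤ 25 * α + 107 * β := by
  have concave₁ : sentRank r 3 + β ≤ 2 * sentRank r 2 := by
    simpa [h.sentRank_one] using h.sentRank_concave (m := 1) (by norm_num)
  have concave₂ : sentRank r 4 + sentRank r 2 ≤ 2 * sentRank r 3 :=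
    h.sentRank_concave (m := 2) (by norm_num)
  have concave₃ : sentRank r 5 + sentRank r 3 ≤ 2 * sentRank r 4 :=
    h.sentRank_concave (m := 3) (by norm_num)
  linarith [h.three_mul_file_le, h.four_mul_file_le]

end IsSymmRepairRank

end Repair

theorem stmt_12_general {Ω : Type*} [Fintype Ω] {n : ℕ} {B α β : ℝ} {P : Ω → ℝ}
    {σM : Type*} {σW : Fin n → Type*} {σS : Fin n → Fin n → Type*}
    {M : Ω → σM} {W : ∀ j, Ω → σW j} {S : ∀ i j, Ω → σS i j}
    (hcode : IsRegenCode n 6 7 B α β P M W S) :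
    10 * B ≤ 25 * α + 107 * β :=
  (hcode.isRepairRank (Fintype.card_fin 8) (Fin.castLEEmb hcode.hdn)).expect_perm.ten_mul_file_le

/-- every `(n,6,7)` exact-repair code with `n ≥ 8` satisfies
`4B ≤ 10α + 43β`. -/
theorem stmt_12 {Ω : Type*} [Fintype Ω] {n : ℕ} {B α β : ℝ} {P : Ω → ℝ}
    {σM : Type*} {σW : Fin n → Type*} {σS : Fin n → Fin n → Type*}
    {M : Ω → σM} {W : ∀ j, Ω → σW j} {S : ∀ i j, Ω → σS i j}
    (hn : 8 ≤ n)
    (hcode : IsRegenCode n 6 7 B α β P M W S) :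
    4 * B ≤ 10 * α + 43 * β := by
  linarith [stmt_12_general hcode, hcode.hβ]
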